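/- arXiv:1207.0730 — 2 statements merged into one kernel-verified Lean document; each statement's English description precedes it below -/
import Mathlib

section
/- Let X, Y, Z be i.i.d. uniform random variables on (0,1) and define the symmetrized centered kernel Ψ_PR(X,Y,Z) = (1/3)(1{min(X/Y, Y/X) < Z} + 1{min(X/Z, Z/X) < Y} + 1{min(Y/Z, Z/Y) < X}) − 1/2. Then the projection of the kernel satisfies E[Ψ_PR(X,Y,Z) | X = s] = 1/6 + (2/3)·s·ln(s) for every s ∈ (0,1). -/
open MeasureTheory Set

/-- The symmetrized centered Puri–Rubin kernel
`Ψ(x,y,z) = (1/3)(1{min(x/y,y/x)<z} + 1{min(x/z,z/x)<y} + 1{min(y/z,z/y)<x}) − 1/2`. -/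
noncomputable def PsiPR (x y z : ℝ) : ℝ :=
  (1 / 3) * ((if min (x / y) (y / x) < z then (1 : ℝ) else 0)
    + (if min (x / z) (z / x) < y then (1 : ℝ) else 0)
    + (if min (y / z) (z / y) < x then (1 : ℝ) else 0)) - 1 / 2

/-!
Averaging over `Y` and `Z`, the kernel becomes a combination of the probabilities of its three
events. Given `Y = y`, the first has conditional probability `1 - min (s / y) (y / s)`, and
integrating over `y` splits at `y = s`: the part `y > s` produces the logarithm. The second event is
the first with `Y` and `Z` exchanged. The third is, up to a null set, the disjoint union of
`{Y < s Z}` and `{Z < s Y}`, each of probability `s / 2`.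
-/

section Product

variable {α β : Type*} [MeasurableSpace α] [MeasurableSpace β]

lemma integral_ite_one_zero {μ : Measure α} {p : α → Prop} [DecidablePred p]
    (hp : MeasurableSet {x | p x}) :
    ∫ x, (if p x then (1 : ℝ) else 0) ∂μ = μ.real {x | p x} := by
  rw [← integral_indicator_one hp]
  simp only [indicator_apply, mem_ofPred_eq, Pi.one_apply]

lemma integrable_ite_one_zero {μ : Measure α} [IsFiniteMeasure μ] {p : α → Prop}
    [DecidablePred p] (hp : MeasurableSet {x | p x}) :
    Integrable (fun x ↦ if p x then (1 : ℝ) else 0) μ := by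
  have indicator_int : Integrable ({x | p x}.indicator fun _ ↦ (1 : ℝ)) μ :=
    (integrable_const 1).indicator hp
  exact indicator_int.congr (.of_forall fun _ ↦ by simp only [indicator_apply, mem_ofPred_eq])

lemma measureReal_prod_eq_integral {μ : Measure α} {ν : Measure β} [SFinite ν]
    {t : Set (α × β)} (ht : MeasurableSet t) (ht_fin : μ.prod ν t ≠ ⊤) :
    (μ.prod ν).real t = ∫ x, ν.real (Prod.mk x ⁻¹' t) ∂μ := by
  simp only [measureReal_def]
  rw [integral_toReal (measurable_measure_prodMk_left ht).aemeasurable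
    (Measure.ae_measure_lt_top ht ht_fin), Measure.prod_apply ht]

lemma measureReal_prod_swap {μ : Measure α} {ν : Measure β} [SFinite μ] [SFinite ν]
    (t : Set (β × α)) : (μ.prod ν).real (Prod.swap ⁻¹' t) = (ν.prod μ).real t :=
  congrArg ENNReal.toReal <| Measure.measurePreserving_swap.measure_preimage_equiv
    (f := MeasurableEquiv.prodComm) t

end Product

/-- The uniform distribution on `(0, 1)`, the common law of `X`, `Y` and `Z`. -/
noncomputable abbrev uniformLaw : Measure ℝ :=
  volume.restrict (Ioo 0 1)

namespace uniformLaw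

instance : IsProbabilityMeasure uniformLaw :=
  ⟨by simp⟩

lemma real_Iio {c : ℝ} (hc : c ∈ Icc 0 1) : uniformLaw.real (Iio c) = c := by
  rw [measureReal_restrict_apply measurableSet_Iio, inter_comm, Ioo_inter_Iio,
    min_eq_right hc.2, Real.volume_real_Ioo_of_le hc.1, sub_zero]

lemma real_Ioi {c : ℝ} (hc : c ∈ Icc 0 1) : uniformLaw.real (Ioi c) = 1 - c := by
  rw [measureReal_restrict_apply measurableSet_Ioi, inter_comm, Ioo_inter_Ioi,
    max_eq_right hc.1, Real.volume_real_Ioo_of_le hc.2]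

lemma ae_mem_Ioo : ∀ᵐ y ∂uniformLaw, y ∈ Ioo (0 : ℝ) 1 :=
  ae_restrict_mem measurableSet_Ioo

lemma ae_prod_mem_Ioo :
    ∀ᵐ p ∂uniformLaw.prod uniformLaw, p.1 ∈ Ioo (0 : ℝ) 1 ∧ p.2 ∈ Ioo (0 : ℝ) 1 :=
  (Measure.quasiMeasurePreserving_fst.ae ae_mem_Ioo).and
    (Measure.quasiMeasurePreserving_snd.ae ae_mem_Ioo)

lemma integral_eq_intervalIntegral {E : Type*} [NormedAddCommGroup E] [NormedSpace ℝ E]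
    (f : ℝ → E) :
    ∫ y, f y ∂uniformLaw = ∫ y in (0 : ℝ)..1, f y := by
  rw [← integral_Ioc_eq_integral_Ioo, intervalIntegral.integral_of_le zero_le_one]

section Graph

variable {α : Type*} [MeasurableSpace α] {μ : Measure α} {f : α → ℝ}

lemma prod_real_snd_lt [IsFiniteMeasure μ] (hf : Measurable f)
    (hf_mem : ∀ᵐ x ∂μ, f x ∈ Icc 0 1) :
    (μ.prod uniformLaw).real {p | p.2 < f p.1} = ∫ x, f x ∂μ := by
  calc (μ.prod uniformLaw).real {p | p.2 < f p.1}
      = ∫ x, uniformLaw.real (Iio (f x)) ∂μ :=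
        measureReal_prod_eq_integral
          (measurableSet_lt measurable_snd (hf.comp measurable_fst)) (measure_ne_top _ _)
    _ = ∫ x, f x ∂μ := integral_congr_ae (hf_mem.mono fun _ hx ↦ real_Iio hx)

lemma prod_real_lt_snd [IsProbabilityMeasure μ] (hf : Measurable f)
    (hf_mem : ∀ᵐ x ∂μ, f x ∈ Icc 0 1) :
    (μ.prod uniformLaw).real {p | f p.1 < p.2} = 1 - ∫ x, f x ∂μ := by
  have hf_int : Integrable f μ := .of_mem_Icc 0 1 hf.aemeasurable hf_mem
  calc (μ.prod uniformLaw).real {p | f p.1 < p.2}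
      = ∫ x, uniformLaw.real (Ioi (f x)) ∂μ :=
        measureReal_prod_eq_integral
          (measurableSet_lt (hf.comp measurable_fst) measurable_snd) (measure_ne_top _ _)
    _ = ∫ x, (1 - f x) ∂μ := integral_congr_ae (hf_mem.mono fun _ hx ↦ real_Ioi hx)
    _ = 1 - ∫ x, f x ∂μ := by
        rw [integral_sub (integrable_const 1) hf_int, integral_const, probReal_univ, one_smul]

end Graph

end uniformLaw

section Ratio

variable {K : Type*} [Field K] [LinearOrder K] [IsStrictOrderedRing K]

lemma min_div_div_mem_Icc {x y : K} (hx : 0 ≤ x) (hy : 0 ≤ y) :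
    min (x / y) (y / x) ∈ Icc 0 1 := by
  refine ⟨le_min (div_nonneg hx hy) (div_nonneg hy hx), ?_⟩
  rcases le_total x y with h | h
  · exact min_le_of_left_le (div_le_one_of_le₀ h hy)
  · exact min_le_of_right_le (div_le_one_of_le₀ h hx)

lemma min_div_div_of_le {s y : K} (hs : 0 < s) (hy : 0 ≤ y) (h : y ≤ s) :
    min (s / y) (y / s) = y / s := by
  rcases hy.eq_or_lt with rfl | hy
  · simp only [div_zero, zero_div, min_self]
  · exact min_eq_right (((div_le_one hs).2 h).trans ((one_le_div hy).2 h))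

lemma min_div_div_of_ge {s y : K} (hs : 0 < s) (h : s ≤ y) :
    min (s / y) (y / s) = s / y :=
  min_eq_left (((div_le_one (hs.trans_le h)).2 h).trans ((one_le_div hs).2 h))

end Ratio

lemma integral_min_div_div {s b : ℝ} (hs : 0 < s) (hsb : s ≤ b) :
    ∫ y in (0 : ℝ)..b, min (s / y) (y / s) = s / 2 + s * Real.log (b / s) := by
  have below : EqOn (fun y ↦ y / s) (fun y ↦ min (s / y) (y / s)) (uIcc 0 s) := fun y hy ↦ by
    rw [uIcc_of_le hs.le] at hy
    exact (min_div_div_of_le hs hy.1 hy.2).symm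
  have above : EqOn (fun y ↦ s * y⁻¹) (fun y ↦ min (s / y) (y / s)) (uIcc s b) := fun y hy ↦ by
    rw [uIcc_of_le hsb] at hy
    exact (min_div_div_of_ge hs hy.1).symm
  have below_int : IntervalIntegrable (fun y ↦ y / s) volume 0 s :=
    (continuous_id.div_const s).intervalIntegrable 0 s
  have above_int : IntervalIntegrable (fun y ↦ s * y⁻¹) volume s b :=
    (intervalIntegrable_inv_iff.2
      (Or.inr (notMem_uIcc_of_lt hs (hs.trans_le hsb)))).const_mul s
  calc ∫ y in (0 : ℝ)..b, min (s / y) (y / s)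
      = (∫ y in (0 : ℝ)..s, min (s / y) (y / s)) + ∫ y in s..b, min (s / y) (y / s) :=
        (intervalIntegral.integral_add_adjacent_intervals
          (below_int.congr (below.mono uIoc_subset_uIcc))
          (above_int.congr (above.mono uIoc_subset_uIcc))).symm
    _ = (∫ y in (0 : ℝ)..s, y / s) + ∫ y in s..b, s * y⁻¹ := by
        rw [intervalIntegral.integral_congr below, intervalIntegral.integral_congr above]
    _ = s / 2 + s * Real.log (b / s) := by
        rw [intervalIntegral.integral_div, integral_id, intervalIntegral.integral_const_mul,
          integral_inv_of_pos hs (hs.trans_le hsb)]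
        field_simp
        ring

namespace uniformLaw

lemma prod_real_min_div_div_lt_snd {s : ℝ} (hs : s ∈ Ioc 0 1) :
    (uniformLaw.prod uniformLaw).real {p | min (s / p.1) (p.1 / s) < p.2}
      = 1 - s / 2 + s * Real.log s := by
  have ratio_mem : ∀ᵐ y ∂uniformLaw, min (s / y) (y / s) ∈ Icc 0 1 :=
    ae_mem_Ioo.mono fun y hy ↦ min_div_div_mem_Icc hs.1.le hy.1.le
  have ratio_meas : Measurable fun y ↦ min (s / y) (y / s) := by fun_prop
  rw [prod_real_lt_snd ratio_meas ratio_mem, integral_eq_intervalIntegral,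
    integral_min_div_div hs.1 hs.2, one_div, Real.log_inv]
  ring

lemma prod_real_min_div_div_lt_fst {s : ℝ} (hs : s ∈ Ioc 0 1) :
    (uniformLaw.prod uniformLaw).real {p | min (s / p.2) (p.2 / s) < p.1}
      = 1 - s / 2 + s * Real.log s := by
  rw [← prod_real_min_div_div_lt_snd hs]
  exact measureReal_prod_swap {p | min (s / p.1) (p.1 / s) < p.2}

lemma prod_real_snd_lt_mul_fst {s : ℝ} (hs : s ∈ Icc 0 1) :
    (uniformLaw.prod uniformLaw).real {p | p.2 < s * p.1} = s / 2 := by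
  have mul_mem : ∀ᵐ y ∂uniformLaw, s * y ∈ Icc 0 1 := ae_mem_Ioo.mono fun y hy ↦
    ⟨mul_nonneg hs.1 hy.1.le, mul_le_one₀ hs.2 hy.1.le hy.2.le⟩
  rw [prod_real_snd_lt (measurable_const_mul s) mul_mem, integral_eq_intervalIntegral,
    intervalIntegral.integral_const_mul, integral_id]
  ring

lemma prod_real_fst_lt_mul_snd {s : ℝ} (hs : s ∈ Icc 0 1) :
    (uniformLaw.prod uniformLaw).real {p | p.1 < s * p.2} = s / 2 := by
  rw [← prod_real_snd_lt_mul_fst hs]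
  exact measureReal_prod_swap {p | p.2 < s * p.1}

lemma prod_real_min_div_div_lt {s : ℝ} (hs : s ∈ Icc 0 1) :
    (uniformLaw.prod uniformLaw).real {p | min (p.1 / p.2) (p.2 / p.1) < s} = s := by
  have eq_union : {p : ℝ × ℝ | min (p.1 / p.2) (p.2 / p.1) < s}
      =ᵐ[uniformLaw.prod uniformLaw] ({p | p.1 < s * p.2} ∪ {p | p.2 < s * p.1} : Set _) := by
    filter_upwards [ae_prod_mem_Ioo] with p ⟨h₁, h₂⟩
    apply propext
    change min (p.1 / p.2) (p.2 / p.1) < s ↔ p.1 < s * p.2 ∨ p.2 < s * p.1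
    rw [min_lt_iff, div_lt_iff₀ h₂.1, div_lt_iff₀ h₁.1]
  have disjoint : AEDisjoint (uniformLaw.prod uniformLaw)
      {p | p.1 < s * p.2} {p | p.2 < s * p.1} := by
    refine measure_eq_zero_iff_ae_notMem.2 ?_
    filter_upwards [ae_prod_mem_Ioo] with p ⟨h₁, h₂⟩ ⟨fst_lt, snd_lt⟩
    exact lt_asymm (fst_lt.trans_le (mul_le_of_le_one_left h₂.1.le hs.2))
      (snd_lt.trans_le (mul_le_of_le_one_left h₁.1.le hs.2))
  rw [measureReal_congr eq_union, measureReal_union₀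
    (measurableSet_lt measurable_snd (by fun_prop)).nullMeasurableSet disjoint,
    prod_real_fst_lt_mul_snd hs, prod_real_snd_lt_mul_fst hs, add_halves]

end uniformLaw

lemma integral_PsiPR_eq_measureReal (μ : Measure (ℝ × ℝ)) [IsProbabilityMeasure μ] (s : ℝ) :
    ∫ p, PsiPR s p.1 p.2 ∂μ
      = 1 / 3 * (μ.real {p | min (s / p.1) (p.1 / s) < p.2}
        + μ.real {p | min (s / p.2) (p.2 / s) < p.1}
        + μ.real {p | min (p.1 / p.2) (p.2 / p.1) < s}) - 1 / 2 := by
  have meas₁ : MeasurableSet {p : ℝ × ℝ | min (s / p.1) (p.1 / s) < p.2} :=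
    measurableSet_lt (by fun_prop) (by fun_prop)
  have meas₂ : MeasurableSet {p : ℝ × ℝ | min (s / p.2) (p.2 / s) < p.1} :=
    measurableSet_lt (by fun_prop) (by fun_prop)
  have meas₃ : MeasurableSet {p : ℝ × ℝ | min (p.1 / p.2) (p.2 / p.1) < s} :=
    measurableSet_lt (by fun_prop) (by fun_prop)
  have int₁ := integrable_ite_one_zero (μ := μ) meas₁
  have int₂ := integrable_ite_one_zero (μ := μ) meas₂
  have int₃ := integrable_ite_one_zero (μ := μ) meas₃
  simp only [PsiPR]
  rw [integral_sub (((int₁.fun_add int₂).fun_add int₃).const_mul _) (integrable_const _),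
    integral_const_mul, integral_add (int₁.fun_add int₂) int₃, integral_add int₁ int₂,
    integral_ite_one_zero meas₁, integral_ite_one_zero meas₂, integral_ite_one_zero meas₃,
    integral_const, probReal_univ, one_smul]

/-- For `X, Y, Z` i.i.d. uniform on `(0,1)`, the projection of the kernel `Ψ_PR`
satisfies `E[Ψ_PR(X,Y,Z) | X = s] = 1/6 + (2/3)·s·ln s` for every `s ∈ (0,1)`:
integrating out the two independent uniform variables `Y, Z` at `X = s` gives
`ψ_PR(s) = 1/6 + (2/3) s ln s`. -/
theorem projection_PsiPR (s : ℝ) (hs : s ∈ Ioo (0 : ℝ) 1) :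
    (∫ p : ℝ × ℝ, PsiPR s p.1 p.2
        ∂((volume.restrict (Ioo (0 : ℝ) 1)).prod (volume.restrict (Ioo (0 : ℝ) 1))))
      = 1 / 6 + (2 / 3) * s * Real.log s := by
  rw [integral_PsiPR_eq_measureReal,
    uniformLaw.prod_real_min_div_div_lt_snd (Ioo_subset_Ioc_self hs),
    uniformLaw.prod_real_min_div_div_lt_fst (Ioo_subset_Ioc_self hs),
    uniformLaw.prod_real_min_div_div_lt (Ioo_subset_Icc_self hs)]
  ring
end

section
/- Let r > 1 and h(x) = r x^{r−1} − 1 for x ∈ (0,1). Then ∫_0^1 h(x)² dx − ( ∫_0^1 h(x) ln(x) dx )² = (r−1)⁴ / ( r² (2r−1) ). Consequently, for the contamination alternative with distribution function G_1(x,θ) = (1−θ)x + θ x^r and density g_1(x,θ) = 1 + θ h(x), the Kullback–Leibler distance K(θ) to the power function family satisfies 2K(θ) ~ ( (r−1)⁴ / ( r² (2r−1) ) ) θ² as θ → 0+. -/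
open MeasureTheory Set Filter Topology

/-!
Write `φ t = t log t + 1 - t`. For a density `g` on `(0, 1)` with `b = -∫ g log`, the divergence of
`g` from `λ x ^ (λ - 1)` equals `∫ φ(g) - log λ + (λ - 1) b`; it is smallest at the maximum
likelihood value `λ = 1 / b`, where it is `∫ φ(g) + log b + 1 - b`.

For `g = 1 + θ h` with `∫ h = 0` we have `b = 1 - θ c`, `c = ∫ h log`, so that
`log b + 1 - b ~ -(θ c) ^ 2 / 2`, while `∫ φ(1 + θ h) ~ θ ^ 2 / 2 * ∫ h ^ 2` by dominated
convergence, because `0 ≤ φ(1 + u) ≤ u ^ 2` for `u ≥ -1`. For `r > 0` the function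
`h(x) = r x ^ (r - 1) - 1` is square integrable exactly when `r > 1 / 2`.
-/

section

open InformationTheory

section SecondOrder

theorem tendsto_div_sq_of_hasDerivAt {F F' : ℝ → ℝ} {A : ℝ}
    (hF : ∀ᶠ t in 𝓝 0, HasDerivAt F (F' t) t) (hF' : HasDerivAt F' A 0)
    (hF0 : F 0 = 0) (hF'0 : F' 0 = 0) :
    Tendsto (fun t => F t / t ^ 2) (𝓝[≠] 0) (𝓝 (A / 2)) := by
  have hslope : Tendsto (fun t => F' t / (2 * t)) (𝓝[≠] 0) (𝓝 (A / 2)) := by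
    refine (hF'.tendsto_slope.div_const 2).congr fun t => ?_
    rw [slope_def_field, hF'0, sub_zero, sub_zero, div_div, mul_comm]
  refine HasDerivAt.lhopital_zero_nhdsNE (hF.filter_mono nhdsWithin_le_nhds)
    (.of_forall fun t => by simpa using hasDerivAt_pow 2 t) ?_ ?_ ?_ hslope
  · filter_upwards [self_mem_nhdsWithin] with t ht using mul_ne_zero two_ne_zero ht
  · simpa [hF0] using hF.self_of_nhds.continuousAt.tendsto.mono_left nhdsWithin_le_nhds
  · simpa using (continuous_pow 2).tendsto (0 : ℝ) |>.mono_left nhdsWithin_le_nhds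

theorem hasDerivAt_one_add_mul (a t : ℝ) : HasDerivAt (fun t => 1 + t * a) a t := by
  simpa using ((hasDerivAt_id t).mul_const a).const_add 1

theorem eventually_one_add_mul_pos (a : ℝ) : ∀ᶠ t in 𝓝 (0 : ℝ), 0 < 1 + t * a :=
  (hasDerivAt_one_add_mul a 0).continuousAt.eventually_const_lt (by simp)

theorem tendsto_klFun_one_add_mul_div_sq (a : ℝ) :
    Tendsto (fun t => klFun (1 + t * a) / t ^ 2) (𝓝[≠] 0) (𝓝 (a ^ 2 / 2)) := by
  refine tendsto_div_sq_of_hasDerivAt (F' := fun t => Real.log (1 + t * a) * a) ?_ ?_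
    (by simp [klFun_one]) (by simp)
  · filter_upwards [eventually_one_add_mul_pos a] with t ht
    exact (hasDerivAt_klFun ht.ne').comp t (hasDerivAt_one_add_mul a t)
  · convert! ((hasDerivAt_one_add_mul a 0).log (by simp)).mul_const a using 1
    simp [sq]

theorem tendsto_log_one_sub_mul_add_div_sq (c : ℝ) :
    Tendsto (fun t => (Real.log (1 - t * c) + t * c) / t ^ 2) (𝓝[≠] 0) (𝓝 (-c ^ 2 / 2)) := by
  have hlin (t : ℝ) : HasDerivAt (fun t => 1 - t * c) (-c) t := by
    simpa [sub_eq_add_neg] using hasDerivAt_one_add_mul (-c) t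
  refine tendsto_div_sq_of_hasDerivAt (F' := fun t => -c / (1 - t * c) + c) ?_ ?_
    (by simp) (by simp)
  · filter_upwards [eventually_one_add_mul_pos (-c)] with t ht
    have hne : 1 - t * c ≠ 0 := by linarith
    simpa using ((hlin t).log hne).fun_add ((hasDerivAt_id t).mul_const c)
  · convert! ((hasDerivAt_const 0 (-c)).div (hlin 0) (by simp)).add_const c using 1
    simp [sq]

theorem klFun_one_add_le_sq {u : ℝ} (hu : -1 ≤ u) : klFun (1 + u) ≤ u ^ 2 := by
  rcases hu.eq_or_lt with rfl | hu
  · simp [klFun_zero]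
  · have hlog : Real.log (1 + u) ≤ u := by
      linarith [Real.log_le_sub_one_of_pos (by linarith : 0 < 1 + u)]
    rw [klFun_apply]
    nlinarith

theorem norm_klFun_one_add_le_sq {u : ℝ} (hu : -1 ≤ u) : ‖klFun (1 + u)‖ ≤ u ^ 2 := by
  rw [Real.norm_of_nonneg (klFun_nonneg (by linarith))]
  exact klFun_one_add_le_sq hu

variable {α : Type*} {_ : MeasurableSpace α} {μ : Measure α} {h : α → ℝ} {C : ℝ}

theorem aestronglyMeasurable_klFun_one_add_mul (hh : AEStronglyMeasurable h μ) (θ : ℝ) :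
    AEStronglyMeasurable (fun x => klFun (1 + θ * h x)) μ :=
  continuous_klFun.comp_aestronglyMeasurable ((hh.const_mul θ).const_add 1)

theorem integrable_klFun_one_add_mul (hh : MemLp h 2 μ) {θ : ℝ} (hθ : ∀ᵐ x ∂μ, 0 ≤ 1 + θ * h x) :
    Integrable (fun x => klFun (1 + θ * h x)) μ := by
  refine (hh.const_mul θ).integrable_sq.mono'
    (aestronglyMeasurable_klFun_one_add_mul hh.aestronglyMeasurable θ) ?_
  filter_upwards [hθ] with x hx using norm_klFun_one_add_le_sq (by linarith)

theorem eventually_forall_one_add_mul_nonneg (C : ℝ) :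
    ∀ᶠ θ in 𝓝[>] (0 : ℝ), ∀ y, C ≤ y → 0 ≤ 1 + θ * y := by
  filter_upwards [(eventually_one_add_mul_pos C).filter_mono nhdsWithin_le_nhds,
    self_mem_nhdsWithin] with θ hC hθ y hy
  linarith [mul_le_mul_of_nonneg_left hy (le_of_lt hθ)]

theorem tendsto_integral_klFun_one_add_mul_div_sq (hh : MemLp h 2 μ) (hC : ∀ᵐ x ∂μ, C ≤ h x) :
    Tendsto (fun θ => (∫ x, klFun (1 + θ * h x) ∂μ) / θ ^ 2) (𝓝[>] 0)
      (𝓝 ((∫ x, h x ^ 2 ∂μ) / 2)) := by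
  simp only [← integral_div]
  refine tendsto_integral_filter_of_dominated_convergence (fun x => h x ^ 2)
    (.of_forall fun θ => ?_) ?_ hh.integrable_sq (.of_forall fun x => ?_)
  · simp only [div_eq_mul_inv]
    exact (aestronglyMeasurable_klFun_one_add_mul hh.aestronglyMeasurable θ).mul_const _
  · filter_upwards [eventually_forall_one_add_mul_nonneg C, self_mem_nhdsWithin] with θ hθ hθ0
    filter_upwards [hC] with x hx
    rw [norm_div, Real.norm_of_nonneg (sq_nonneg θ), div_le_iff₀ (pow_pos hθ0 2), mul_comm,
      ← mul_pow]
    exact norm_klFun_one_add_le_sq (by linarith [hθ _ hx])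
  · exact (tendsto_klFun_one_add_mul_div_sq (h x)).mono_left (nhdsGT_le_nhdsNE 0)

end SecondOrder

section Integrals

theorem integrableOn_Ioo_zero_one_rpow {p : ℝ} (hp : -1 < p) :
    IntegrableOn (fun x : ℝ => x ^ p) (Ioo 0 1) :=
  (intervalIntegral.integrableOn_Ioo_rpow_iff zero_lt_one).2 hp

theorem integral_Ioo_zero_one_rpow {p : ℝ} (hp : -1 < p) :
    ∫ x in Ioo (0 : ℝ) 1, x ^ p = 1 / (p + 1) := by
  rw [← integral_Ioc_eq_integral_Ioo, ← intervalIntegral.integral_of_le zero_le_one,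
    integral_rpow (Or.inl hp), Real.one_rpow, Real.zero_rpow (by linarith), sub_zero]

theorem hasDerivAt_klFun_rpow_div_sq {q x : ℝ} (hq : q ≠ 0) (hx : 0 < x) :
    HasDerivAt (fun x => klFun (x ^ q) / q ^ 2) (x ^ (q - 1) * Real.log x) x := by
  convert! (((hasDerivAt_klFun (Real.rpow_pos_of_pos hx q).ne').comp x
    (Real.hasDerivAt_rpow_const (Or.inl hx.ne'))).div_const (q ^ 2)) using 1
  rw [Real.log_rpow hx]
  field_simp

theorem continuous_klFun_rpow_div_sq {q : ℝ} (hq : 0 ≤ q) :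
    Continuous fun x => klFun (x ^ q) / q ^ 2 :=
  (continuous_klFun.comp (Real.continuous_rpow_const hq)).div_const _

theorem integrableOn_Ioo_zero_one_rpow_mul_log {p : ℝ} (hp : -1 < p) :
    IntegrableOn (fun x => x ^ p * Real.log x) (Ioo 0 1) := by
  have hp' : 0 < p + 1 := by linarith
  have hneg : IntegrableOn (fun x => -(x ^ p * Real.log x)) (Ioc 0 1) := by
    refine intervalIntegral.integrableOn_deriv_of_nonneg
      (continuous_klFun_rpow_div_sq hp'.le).neg.continuousOn (fun x hx => ?_) fun x hx => ?_
    · simpa using (hasDerivAt_klFun_rpow_div_sq hp'.ne' hx.1).neg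
    · exact neg_nonneg.2 (mul_nonpos_of_nonneg_of_nonpos (Real.rpow_nonneg hx.1.le p)
        (Real.log_nonpos hx.1.le hx.2.le))
  simpa using (hneg.mono_set Ioo_subset_Ioc_self).neg

theorem integral_Ioo_zero_one_rpow_mul_log {p : ℝ} (hp : -1 < p) :
    ∫ x in Ioo (0 : ℝ) 1, x ^ p * Real.log x = -1 / (p + 1) ^ 2 := by
  have hp' : 0 < p + 1 := by linarith
  rw [← integral_Ioc_eq_integral_Ioo, ← intervalIntegral.integral_of_le zero_le_one,
    intervalIntegral.integral_eq_sub_of_hasDerivAt_of_le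
      (f := fun x => klFun (x ^ (p + 1)) / (p + 1) ^ 2) zero_le_one
      (continuous_klFun_rpow_div_sq hp'.le).continuousOn
      (fun x hx => by simpa using hasDerivAt_klFun_rpow_div_sq hp'.ne' hx.1)
      ((intervalIntegrable_iff_integrableOn_Ioo_of_le zero_le_one).2
        (integrableOn_Ioo_zero_one_rpow_mul_log hp))]
  simp [Real.zero_rpow hp'.ne', klFun_one, klFun_zero, neg_div]

theorem integral_Ioo_zero_one_log : ∫ x in Ioo (0 : ℝ) 1, Real.log x = -1 := by
  simpa using integral_Ioo_zero_one_rpow_mul_log (p := 0) (by norm_num)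

theorem memLp_two_Ioo_zero_one_rpow {p : ℝ} (hp : -(1 / 2) < p) :
    MemLp (fun x : ℝ => x ^ p) 2 (volume.restrict (Ioo 0 1)) := by
  rw [memLp_two_iff_integrable_sq (by fun_prop)]
  refine (integrableOn_Ioo_zero_one_rpow (by linarith : -1 < p * 2)).congr_fun (fun x hx => ?_)
    measurableSet_Ioo
  exact_mod_cast Real.rpow_mul_natCast hx.1.le p 2

theorem memLp_two_Ioo_zero_one_log : MemLp Real.log 2 (volume.restrict (Ioo 0 1)) := by
  refine ((memLp_two_Ioo_zero_one_rpow (p := -(1 / 4)) (by norm_num)).const_mul 4).mono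
    Real.measurable_log.aestronglyMeasurable ?_
  filter_upwards [ae_restrict_mem measurableSet_Ioo] with x hx
  have hx4 : 0 < x ^ (1 / 4 : ℝ) := Real.rpow_pos_of_pos hx.1 _
  have hlog := (Real.abs_log_mul_self_rpow_lt x (1 / 4) hx.1 hx.2.le (by norm_num)).le
  rw [abs_mul, abs_of_pos hx4, ← le_div_iff₀ hx4] at hlog
  rw [Real.rpow_neg hx.1.le, Real.norm_eq_abs, norm_mul, norm_inv, Real.norm_of_nonneg hx4.le]
  exact hlog.trans_eq (by norm_num [div_eq_mul_inv])

end Integrals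

section PowerFamily

/-- The Kullback–Leibler distance of a density `g` on `(0, 1)` to the family of power function
densities `l * x ^ (l - 1)`, `l > 0`. Since `Real.log 0 = 0`, the integrand is `0` where `g` is. -/
noncomputable def powerFamilyKL (g : ℝ → ℝ) : ℝ :=
  sInf ((fun l : ℝ => ∫ x in Ioo (0 : ℝ) 1, Real.log (g x / (l * x ^ (l - 1))) * g x) '' Ioi 0)

theorem isLeast_image_sub_log_add_mul (a : ℝ) {b : ℝ} (hb : 0 < b) :
    IsLeast ((fun l => a - Real.log l + (l - 1) * b) '' Ioi 0) (a + (Real.log b + 1 - b)) := by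
  refine ⟨⟨b⁻¹, inv_pos.2 hb, ?_⟩, ?_⟩
  · simp only [Real.log_inv, sub_mul, inv_mul_cancel₀ hb.ne']
    ring
  · rintro _ ⟨l, hl : 0 < l, rfl⟩
    have hlog := Real.log_le_sub_one_of_pos (mul_pos hl hb)
    rw [Real.log_mul hl.ne' hb.ne'] at hlog
    linarith

variable {g : ℝ → ℝ}

theorem log_div_power_mul_eq {y l x : ℝ} (hl : 0 < l) (hx : 0 < x) :
    Real.log (y / (l * x ^ (l - 1))) * y
      = klFun y + (y - 1) - (Real.log l * y + (l - 1) * (y * Real.log x)) := by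
  rcases eq_or_ne y 0 with rfl | hy
  · simp [klFun_zero]
  · have hxl := Real.rpow_pos_of_pos hx (l - 1)
    rw [Real.log_div hy (by positivity), Real.log_mul hl.ne' hxl.ne', Real.log_rpow hx,
      klFun_apply]
    ring

theorem integral_log_div_power_mul (hg1 : ∫ x in Ioo 0 1, g x = 1)
    (hkl : IntegrableOn (fun x => klFun (g x)) (Ioo 0 1))
    (hlog : IntegrableOn (fun x => g x * Real.log x) (Ioo 0 1)) {l : ℝ} (hl : 0 < l) :
    ∫ x in Ioo 0 1, Real.log (g x / (l * x ^ (l - 1))) * g x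
      = (∫ x in Ioo 0 1, klFun (g x)) - Real.log l
        + (l - 1) * -∫ x in Ioo 0 1, g x * Real.log x := by
  have hg : IntegrableOn g (Ioo 0 1) := integrable_of_integral_eq_one hg1
  have hc : IntegrableOn (fun _ => (1 : ℝ)) (Ioo (0 : ℝ) 1) := integrable_const 1
  have hmean : ∫ x in Ioo 0 1, (g x - 1) = 0 := by
    rw [integral_sub hg hc, hg1]
    simp
  rw [setIntegral_congr_fun measurableSet_Ioo fun x hx => log_div_power_mul_eq hl hx.1,
    integral_sub (hkl.fun_add (hg.fun_sub hc)) ((hg.const_mul _).fun_add (hlog.const_mul _)),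
    integral_add hkl (hg.fun_sub hc), integral_add (hg.const_mul _) (hlog.const_mul _),
    integral_const_mul, integral_const_mul, hmean, hg1]
  ring

theorem integral_mul_log_neg (hg0 : ∀ x ∈ Ioo (0 : ℝ) 1, 0 ≤ g x)
    (hg1 : ∫ x in Ioo 0 1, g x = 1)
    (hlog : IntegrableOn (fun x => g x * Real.log x) (Ioo 0 1)) :
    ∫ x in Ioo 0 1, g x * Real.log x < 0 := by
  have hnonpos (x : ℝ) (hx : x ∈ Ioo 0 1) : g x * Real.log x ≤ 0 :=
    mul_nonpos_of_nonneg_of_nonpos (hg0 x hx) (Real.log_nonpos hx.1.le hx.2.le)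
  refine (setIntegral_nonpos measurableSet_Ioo hnonpos).lt_of_ne fun hzero => ?_
  have hae : (fun x => -(g x * Real.log x)) =ᵐ[volume.restrict (Ioo 0 1)] 0 := by
    refine (setIntegral_eq_zero_iff_of_nonneg_ae ?_ hlog.neg).1
      (by simp [integral_neg, hzero])
    filter_upwards [ae_restrict_mem measurableSet_Ioo] with x hx
    exact neg_nonneg.2 (hnonpos x hx)
  have hg : g =ᵐ[volume.restrict (Ioo 0 1)] 0 := by
    filter_upwards [hae, ae_restrict_mem measurableSet_Ioo] with x hx hx01
    exact (mul_eq_zero.1 (neg_eq_zero.1 hx)).resolve_right (Real.log_neg hx01.1 hx01.2).ne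
  simp [integral_congr_ae hg] at hg1

theorem powerFamilyKL_eq (hg0 : ∀ x ∈ Ioo (0 : ℝ) 1, 0 ≤ g x)
    (hg1 : ∫ x in Ioo 0 1, g x = 1)
    (hkl : IntegrableOn (fun x => klFun (g x)) (Ioo 0 1))
    (hlog : IntegrableOn (fun x => g x * Real.log x) (Ioo 0 1)) :
    powerFamilyKL g = (∫ x in Ioo 0 1, klFun (g x))
      + (Real.log (-∫ x in Ioo 0 1, g x * Real.log x) + 1
        + ∫ x in Ioo 0 1, g x * Real.log x) := by
  rw [powerFamilyKL,
    image_congr (s := Ioi 0) fun l hl => integral_log_div_power_mul hg1 hkl hlog hl]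
  simpa only [sub_neg_eq_add] using (isLeast_image_sub_log_add_mul _
    (neg_pos.2 (integral_mul_log_neg hg0 hg1 hlog))).csInf_eq

variable {h : ℝ → ℝ} {C : ℝ}

theorem powerFamilyKL_one_add_mul (hh : MemLp h 2 (volume.restrict (Ioo 0 1)))
    (h0 : ∫ x in Ioo 0 1, h x = 0) {θ : ℝ} (hθ : ∀ x ∈ Ioo (0 : ℝ) 1, 0 ≤ 1 + θ * h x) :
    powerFamilyKL (fun x => 1 + θ * h x) = (∫ x in Ioo 0 1, klFun (1 + θ * h x))
      + (Real.log (1 - θ * ∫ x in Ioo 0 1, h x * Real.log x)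
        + θ * ∫ x in Ioo 0 1, h x * Real.log x) := by
  have hint : IntegrableOn h (Ioo 0 1) := hh.integrable one_le_two
  have hlog : IntegrableOn Real.log (Ioo 0 1) := memLp_two_Ioo_zero_one_log.integrable one_le_two
  have hhlog : IntegrableOn (fun x => h x * Real.log x) (Ioo 0 1) :=
    hh.integrable_mul memLp_two_Ioo_zero_one_log
  have hmass : ∫ x in Ioo 0 1, (1 + θ * h x) = 1 := by
    rw [integral_add (integrable_const 1) (hint.const_mul θ), integral_const_mul, h0]
    simp
  have hsplit : (fun x => (1 + θ * h x) * Real.log x)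
      = fun x => Real.log x + θ * (h x * Real.log x) := by
    ext x
    ring
  have hmean : ∫ x in Ioo 0 1, (1 + θ * h x) * Real.log x
      = -1 + θ * ∫ x in Ioo 0 1, h x * Real.log x := by
    rw [hsplit, integral_add hlog (hhlog.const_mul θ), integral_const_mul,
      integral_Ioo_zero_one_log]
  rw [powerFamilyKL_eq hθ hmass
    (integrable_klFun_one_add_mul hh <| (ae_restrict_mem measurableSet_Ioo).mono hθ)
    (hsplit ▸ hlog.add (hhlog.const_mul θ)), hmean]
  ring_nf

theorem tendsto_two_mul_powerFamilyKL_div_sq (hh : MemLp h 2 (volume.restrict (Ioo 0 1)))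
    (h0 : ∫ x in Ioo 0 1, h x = 0) (hC : ∀ x ∈ Ioo (0 : ℝ) 1, C ≤ h x) :
    Tendsto (fun θ => 2 * powerFamilyKL (fun x => 1 + θ * h x) / θ ^ 2) (𝓝[>] 0)
      (𝓝 ((∫ x in Ioo 0 1, h x ^ 2) - (∫ x in Ioo 0 1, h x * Real.log x) ^ 2)) := by
  have hkl := tendsto_integral_klFun_one_add_mul_div_sq hh
    ((ae_restrict_mem measurableSet_Ioo).mono hC)
  have hlog := (tendsto_log_one_sub_mul_add_div_sq (∫ x in Ioo 0 1, h x * Real.log x)).mono_left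
    (nhdsGT_le_nhdsNE 0)
  convert! ((hkl.add hlog).const_mul 2).congr' ?_ using 2
  · ring
  · filter_upwards [eventually_forall_one_add_mul_nonneg C] with θ hθ
    rw [powerFamilyKL_one_add_mul hh h0 fun x hx => hθ _ (hC x hx)]
    ring

end PowerFamily

section Contamination

/-- The score at `θ = 0` of the contamination alternative `(1 - θ) * x + θ * x ^ r`, that is, the
`θ`-derivative of its density. -/
noncomputable def contaminationScore (r x : ℝ) : ℝ := r * x ^ (r - 1) - 1

variable {r : ℝ}

theorem neg_one_le_contaminationScore (hr : 0 ≤ r) {x : ℝ} (hx : 0 ≤ x) :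
    -1 ≤ contaminationScore r x := by
  have := mul_nonneg hr (Real.rpow_nonneg hx (r - 1))
  rw [contaminationScore]
  linarith

theorem memLp_two_contaminationScore (hr : 1 / 2 < r) :
    MemLp (contaminationScore r) 2 (volume.restrict (Ioo 0 1)) :=
  ((memLp_two_Ioo_zero_one_rpow (by linarith)).const_mul r).sub (memLp_const 1)

theorem integral_contaminationScore (hr : 0 < r) :
    ∫ x in Ioo 0 1, contaminationScore r x = 0 := by
  have hpow := integrableOn_Ioo_zero_one_rpow (by linarith : -1 < r - 1)
  simp only [contaminationScore]
  rw [integral_sub (hpow.const_mul r) (integrable_const 1), integral_const_mul,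
    integral_Ioo_zero_one_rpow (by linarith), sub_add_cancel, mul_one_div_cancel hr.ne']
  simp

theorem integral_contaminationScore_sq (hr : 1 / 2 < r) :
    ∫ x in Ioo 0 1, contaminationScore r x ^ 2 = (r - 1) ^ 2 / (2 * r - 1) := by
  have hr₀ : r ≠ 0 := by linarith
  have hr₂ : 2 * r - 1 ≠ 0 := by linarith
  have hquad : IntegrableOn (fun x => r ^ 2 * x ^ (2 * (r - 1))) (Ioo 0 1) :=
    (integrableOn_Ioo_zero_one_rpow (by linarith)).const_mul _
  have hlin : IntegrableOn (fun x => 2 * r * x ^ (r - 1)) (Ioo 0 1) :=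
    (integrableOn_Ioo_zero_one_rpow (by linarith)).const_mul _
  have hexpand : EqOn (fun x => contaminationScore r x ^ 2)
      (fun x => r ^ 2 * x ^ (2 * (r - 1)) - 2 * r * x ^ (r - 1) + 1) (Ioo 0 1) := by
    intro x hx
    simp only [contaminationScore, two_mul (r - 1), Real.rpow_add hx.1]
    ring
  calc ∫ x in Ioo 0 1, contaminationScore r x ^ 2
      = r ^ 2 * (1 / (2 * (r - 1) + 1)) - 2 * r * (1 / (r - 1 + 1)) + 1 := by
        rw [setIntegral_congr_fun measurableSet_Ioo hexpand,
          integral_add (hquad.fun_sub hlin) (integrable_const 1), integral_sub hquad hlin,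
          integral_const_mul, integral_const_mul, integral_Ioo_zero_one_rpow (by linarith),
          integral_Ioo_zero_one_rpow (by linarith)]
        simp
    _ = r ^ 2 / (2 * r - 1) - 1 := by
        rw [show 2 * (r - 1) + 1 = 2 * r - 1 by ring, sub_add_cancel, mul_assoc 2 r,
          mul_one_div_cancel hr₀]
        ring
    _ = (r - 1) ^ 2 / (2 * r - 1) := by
        rw [div_sub_one hr₂]
        ring

theorem integral_contaminationScore_mul_log (hr : 0 < r) :
    ∫ x in Ioo 0 1, contaminationScore r x * Real.log x = (r - 1) / r := by
  have hlog : IntegrableOn Real.log (Ioo 0 1) := memLp_two_Ioo_zero_one_log.integrable one_le_two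
  have hpow := (integrableOn_Ioo_zero_one_rpow_mul_log (by linarith : -1 < r - 1)).const_mul r
  simp only [contaminationScore, sub_mul, one_mul, mul_assoc]
  rw [integral_sub hpow hlog, integral_const_mul, integral_Ioo_zero_one_log,
    integral_Ioo_zero_one_rpow_mul_log (by linarith), sub_add_cancel]
  field_simp
  ring

theorem integral_contaminationScore_sq_sub (hr : 1 / 2 < r) :
    (∫ x in Ioo 0 1, contaminationScore r x ^ 2)
        - (∫ x in Ioo 0 1, contaminationScore r x * Real.log x) ^ 2
      = (r - 1) ^ 4 / (r ^ 2 * (2 * r - 1)) := by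
  have hr₀ : r ≠ 0 := by linarith
  have hr₂ : 2 * r - 1 ≠ 0 := by linarith
  rw [integral_contaminationScore_sq hr, integral_contaminationScore_mul_log (by linarith), div_pow,
    div_sub_div _ _ hr₂ (pow_ne_zero 2 hr₀)]
  congr 1 <;> ring

theorem kullback_leibler_contamination_general (hr : 1 / 2 < r) :
    (∫ x in Ioo 0 1, contaminationScore r x ^ 2)
        - (∫ x in Ioo 0 1, contaminationScore r x * Real.log x) ^ 2
      = (r - 1) ^ 4 / (r ^ 2 * (2 * r - 1)) ∧
    Tendsto (fun θ => 2 * powerFamilyKL (fun x => 1 + θ * contaminationScore r x) / θ ^ 2)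
      (𝓝[>] 0) (𝓝 ((r - 1) ^ 4 / (r ^ 2 * (2 * r - 1)))) := by
  refine ⟨integral_contaminationScore_sq_sub hr, ?_⟩
  rw [← integral_contaminationScore_sq_sub hr]
  exact tendsto_two_mul_powerFamilyKL_div_sq (memLp_two_contaminationScore hr)
    (integral_contaminationScore (by linarith))
    fun x hx => neg_one_le_contaminationScore (by linarith) hx.1.le

end Contamination

end

/-- **Kullback–Leibler asymptotics for the contamination alternative.**
For `r > 1` and `h(x) = r x^{r−1} − 1`, one has
`∫₀¹ h² − (∫₀¹ h(x) ln x dx)² = (r−1)⁴/(r²(2r−1))`.  Consequently, for the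
contamination alternative `G₁(x,θ) = (1−θ)x + θ x^r` with density
`g₁(x,θ) = 1 + θ h(x)`, the Kullback–Leibler distance
`K(θ) = inf_{λ>0} ∫₀¹ ln(g₁(x,θ)/(λ x^{λ−1})) g₁(x,θ) dx` to the power function
family satisfies `2K(θ) ~ ((r−1)⁴/(r²(2r−1))) θ²` as `θ → 0+`. -/
theorem kullback_leibler_contamination (r : ℝ) (hr : 1 < r) :
    ((∫ x in Ioo (0 : ℝ) 1, (r * x ^ (r - 1) - 1) ^ 2)
        - (∫ x in Ioo (0 : ℝ) 1, (r * x ^ (r - 1) - 1) * Real.log x) ^ 2)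
      = (r - 1) ^ 4 / (r ^ 2 * (2 * r - 1)) ∧
    Tendsto
      (fun θ : ℝ =>
        2 * sInf ((fun l : ℝ =>
            ∫ x in Ioo (0 : ℝ) 1,
              Real.log ((1 + θ * (r * x ^ (r - 1) - 1)) / (l * x ^ (l - 1)))
                * (1 + θ * (r * x ^ (r - 1) - 1))) '' Ioi 0)
          / θ ^ 2)
      (𝓝[>] 0)
      (𝓝 ((r - 1) ^ 4 / (r ^ 2 * (2 * r - 1)))) :=
  kullback_leibler_contamination_general (by linarith)
end
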